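/- For all real numbers T > 0, x > 0 and z > 0, one has ∫₀^T (z/(T−s)) · (2π(T−s))^{-1/2} · exp(−z²/(2(T−s))) · (2πs)^{-1/2} · exp(−x²/(2s)) ds = (2πT)^{-1/2} · exp(−(x+z)²/(2T)), where the integral is the Lebesgue integral over (0, T). -/

import Mathlib

open MeasureTheory Real

/-!
Write `φ_r` for the centered Gaussian density of variance `r`. Conditioning a Brownian motion on
its value at time `T` factors the product of the two densities as
`φ_s(x) φ_{T-s}(z) = φ_T(x + z) φ_{s(T-s)/T}((sz - (T-s)x)/T)`, the second factor being a marginal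
of the Brownian bridge. It remains to see that `z/(T-s)` times this factor integrates to `1`.
With `v = √(s/(T-s))` that integral becomes `2z ∫₀^∞ φ_T(zv - x/v) dv`, which the
Cauchy–Schlömilch transformation identifies with `∫ φ_T = 1`.
-/

section ChangeOfVariables

open Set

variable {E : Type*} [NormedAddCommGroup E] [NormedSpace ℝ E]

lemma hasDerivAt_const_div {v : ℝ} (c : ℝ) (hv : v ≠ 0) :
    HasDerivAt (fun u ↦ c / u) (-(c / v ^ 2)) v := by
  simpa only [div_eq_mul_inv, mul_neg] using (hasDerivAt_inv hv).const_mul c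

theorem integral_Ioi_div_sq_smul_comp_div {c : ℝ} (hc : 0 < c) (g : ℝ → E) :
    ∫ v in Ioi 0, (c / v ^ 2) • g (c / v) = ∫ v in Ioi 0, g v := by
  have himage : (fun v ↦ c / v) '' Ioi 0 = Ioi 0 := by
    refine Subset.antisymm (image_subset_iff.2 fun v hv ↦ div_pos hc hv) fun v hv ↦ ?_
    exact ⟨c / v, div_pos hc hv, div_div_cancel₀ hc.ne'⟩
  have hanti : AntitoneOn (fun v ↦ c / v) (Ioi 0) := fun u hu v _ huv ↦
    div_le_div_of_nonneg_left hc.le hu huv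
  have hcov := integral_image_eq_integral_deriv_smul_of_antitoneOn measurableSet_Ioi
    (fun v hv ↦ (hasDerivAt_const_div c (ne_of_gt hv)).hasDerivWithinAt) hanti g
  simpa only [himage, neg_neg] using hcov.symm

lemma hasDerivAt_mul_sub_div {v : ℝ} (a b : ℝ) (hv : v ≠ 0) :
    HasDerivAt (fun u ↦ a * u - b / u) (a + b / v ^ 2) v := by
  simpa only [id, mul_one, sub_neg_eq_add] using!
    ((hasDerivAt_id v).const_mul a).sub (hasDerivAt_const_div b hv)

lemma monotoneOn_mul_sub_div {a b : ℝ} (ha : 0 ≤ a) (hb : 0 ≤ b) :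
    MonotoneOn (fun v ↦ a * v - b / v) (Ioi 0) := fun _ hu _ _ huv ↦
  sub_le_sub (mul_le_mul_of_nonneg_left huv ha) (div_le_div_of_nonneg_left hb hu huv)

lemma image_mul_sub_div_Ioi {a b : ℝ} (ha : 0 < a) (hb : 0 < b) :
    (fun v ↦ a * v - b / v) '' Ioi 0 = univ := by
  refine eq_univ_of_forall fun w ↦ ?_
  -- The preimage of `w` is the positive root of `a * v ^ 2 - w * v - b`.
  set r := √(w ^ 2 + 4 * (a * b))
  have hr : r ^ 2 = w ^ 2 + 4 * (a * b) := sq_sqrt (by positivity)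
  have hpos : 0 < w + r := by
    have : -w < r := lt_sqrt_of_sq_lt (by nlinarith [mul_pos ha hb])
    linarith
  refine ⟨(w + r) / (2 * a), div_pos hpos (by positivity), ?_⟩
  field_simp
  linarith

theorem integrableOn_Ioi_smul_comp_mul_sub_div_iff {a b : ℝ} (ha : 0 < a) (hb : 0 < b)
    (f : ℝ → E) :
    IntegrableOn (fun v ↦ (a + b / v ^ 2) • f (a * v - b / v)) (Ioi 0) ↔ Integrable f := by
  rw [← integrableOn_image_iff_integrableOn_deriv_smul_of_monotoneOn measurableSet_Ioi
      (fun v hv ↦ (hasDerivAt_mul_sub_div a b (ne_of_gt hv)).hasDerivWithinAt)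
      (monotoneOn_mul_sub_div ha.le hb.le), image_mul_sub_div_Ioi ha hb, integrableOn_univ]

theorem integral_Ioi_smul_comp_mul_sub_div {a b : ℝ} (ha : 0 < a) (hb : 0 < b) (f : ℝ → E) :
    ∫ v in Ioi 0, (a + b / v ^ 2) • f (a * v - b / v) = ∫ w, f w := by
  rw [← integral_image_eq_integral_deriv_smul_of_monotoneOn measurableSet_Ioi
      (fun v hv ↦ (hasDerivAt_mul_sub_div a b (ne_of_gt hv)).hasDerivWithinAt)
      (monotoneOn_mul_sub_div ha.le hb.le), image_mul_sub_div_Ioi ha hb, setIntegral_univ]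

theorem integrableOn_Ioi_comp_mul_sub_div {a b : ℝ} (ha : 0 < a) (hb : 0 < b)
    {f : ℝ → E} (hf : Integrable f) : IntegrableOn (fun v ↦ f (a * v - b / v)) (Ioi 0) := by
  have hweighted := (integrableOn_Ioi_smul_comp_mul_sub_div_iff ha hb f).2 hf
  have hle (v : ℝ) : a ≤ a + b / v ^ 2 := le_add_of_nonneg_right (by positivity)
  have hbound (v : ℝ) : ‖(a + b / v ^ 2)⁻¹‖ ≤ a⁻¹ := by
    rw [norm_inv, norm_of_nonneg (ha.le.trans (hle v))]
    exact inv_anti₀ ha (hle v)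
  have hmeas : Measurable fun v : ℝ ↦ (a + b / v ^ 2)⁻¹ := by fun_prop
  refine (hweighted.bdd_smul a⁻¹ hmeas.aestronglyMeasurable (.of_forall hbound)).congr
    (.of_forall fun v ↦ ?_)
  exact inv_smul_smul₀ (ha.trans_le (hle v)).ne' _

/-- The Cauchy–Schlömilch transformation. -/
theorem integral_Ioi_comp_mul_sub_div_of_even {a b : ℝ} (ha : 0 < a) (hb : 0 < b)
    {f : ℝ → E} (hf : Integrable f) (heven : f.Even) :
    (2 * a) • ∫ v in Ioi 0, f (a * v - b / v) = ∫ w, f w := by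
  have hcomp := integrableOn_Ioi_comp_mul_sub_div ha hb hf
  have hdiv : IntegrableOn (fun v ↦ (b / v ^ 2) • f (a * v - b / v)) (Ioi 0) := by
    refine (((integrableOn_Ioi_smul_comp_mul_sub_div_iff ha hb f).2 hf).sub
      (hcomp.smul a)).congr (.of_forall fun v ↦ ?_)
    simp only [Pi.sub_apply, Pi.smul_apply, add_smul, add_sub_cancel_left]
  -- The inversion `v ↦ (b / a) / v` changes the sign of `a * v - b / v`.
  have hinv : ∫ v in Ioi 0, (b / v ^ 2) • f (a * v - b / v) =
      a • ∫ v in Ioi 0, f (a * v - b / v) := by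
    rw [← integral_Ioi_div_sq_smul_comp_div (div_pos hb ha), ← integral_smul]
    refine setIntegral_congr_fun measurableSet_Ioi fun v (hv : 0 < v) ↦ ?_
    have hneg : a * (b / a / v) - b / (b / a / v) = -(a * v - b / v) := by
      field_simp
      ring
    simp only [hneg, heven.eq, smul_smul]
    congr 1
    field_simp
  calc (2 * a) • ∫ v in Ioi 0, f (a * v - b / v)
      = (∫ v in Ioi 0, a • f (a * v - b / v)) +
          ∫ v in Ioi 0, (b / v ^ 2) • f (a * v - b / v) := by
        rw [hinv, integral_smul, ← add_smul, two_mul]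
    _ = ∫ v in Ioi 0, (a + b / v ^ 2) • f (a * v - b / v) := by
        simp only [add_smul]
        exact (integral_add (hcomp.smul a) hdiv).symm
    _ = ∫ w, f w := integral_Ioi_smul_comp_mul_sub_div ha hb f

lemma hasDerivAt_mul_sq_div_one_add_sq (T v : ℝ) :
    HasDerivAt (fun u ↦ T * u ^ 2 / (1 + u ^ 2)) (2 * T * v / (1 + v ^ 2) ^ 2) v := by
  have hquot := ((hasDerivAt_pow 2 v).const_mul T).div ((hasDerivAt_pow 2 v).const_add 1)
    (by positivity)
  refine hquot.congr_deriv ?_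
  push_cast
  ring

lemma monotoneOn_mul_sq_div_one_add_sq {T : ℝ} (hT : 0 ≤ T) :
    MonotoneOn (fun v ↦ T * v ^ 2 / (1 + v ^ 2)) (Ioi 0) := by
  intro u (hu : 0 < u) v _ huv
  have hsq : u ^ 2 ≤ v ^ 2 := pow_le_pow_left₀ hu.le huv 2
  rw [div_le_div_iff₀ (by positivity) (by positivity)]
  nlinarith [mul_le_mul_of_nonneg_left hsq hT]

lemma image_mul_sq_div_one_add_sq_Ioi {T : ℝ} (hT : 0 < T) :
    (fun v ↦ T * v ^ 2 / (1 + v ^ 2)) '' Ioi 0 = Ioo 0 T := by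
  refine Subset.antisymm (image_subset_iff.2 fun v (hv : 0 < v) ↦ ⟨by positivity, ?_⟩) ?_
  · rw [div_lt_iff₀ (by positivity)]
    linarith
  · rintro s ⟨hs, hsT⟩
    have hodds : 0 < s / (T - s) := div_pos hs (sub_pos.2 hsT)
    refine ⟨√(s / (T - s)), sqrt_pos.2 hodds, ?_⟩
    have : T - s ≠ 0 := (sub_pos.2 hsT).ne'
    simp only [sq_sqrt hodds.le]
    field_simp
    ring

theorem integral_Ioo_eq_integral_Ioi_smul_comp_mul_sq_div_one_add_sq {T : ℝ} (hT : 0 < T)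
    (g : ℝ → E) :
    ∫ s in Ioo 0 T, g s =
      ∫ v in Ioi 0, (2 * T * v / (1 + v ^ 2) ^ 2) • g (T * v ^ 2 / (1 + v ^ 2)) := by
  rw [← image_mul_sq_div_one_add_sq_Ioi hT]
  exact integral_image_eq_integral_deriv_smul_of_monotoneOn measurableSet_Ioi
    (fun v _ ↦ (hasDerivAt_mul_sq_div_one_add_sq T v).hasDerivWithinAt)
    (monotoneOn_mul_sq_div_one_add_sq hT.le) g

end ChangeOfVariables

/-- The centered Gaussian density of variance `r` at `y`, written `φ_r(y)` in the paper. The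
variance is a real number, rather than an `ℝ≥0` as in `ProbabilityTheory.gaussianPDFReal`, so that
`T - s` is an ordinary subtraction; the value is meaningful only for `0 < r`. -/
noncomputable def gaussianDensity (r y : ℝ) : ℝ :=
  (2 * π * r) ^ (-(1 : ℝ) / 2) * exp (-y ^ 2 / (2 * r))

namespace gaussianDensity

lemma coe_eq_gaussianPDFReal (r : NNReal) :
    gaussianDensity r = ProbabilityTheory.gaussianPDFReal 0 r := by
  ext y
  rw [gaussianDensity, ProbabilityTheory.gaussianPDFReal, sub_zero, neg_div,
    rpow_neg (by positivity), ← sqrt_eq_rpow]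

lemma integrable {r : ℝ} (hr : 0 ≤ r) : Integrable (gaussianDensity r) := by
  lift r to NNReal using hr
  exact coe_eq_gaussianPDFReal r ▸ ProbabilityTheory.integrable_gaussianPDFReal 0 r

lemma integral_eq_one {r : ℝ} (hr : 0 < r) : ∫ y, gaussianDensity r y = 1 := by
  lift r to NNReal using hr.le
  rw [coe_eq_gaussianPDFReal]
  exact ProbabilityTheory.integral_gaussianPDFReal_eq_one 0 (by exact_mod_cast hr.ne')

lemma even (r : ℝ) : (gaussianDensity r).Even := fun y ↦ by
  simp only [gaussianDensity, neg_sq]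

lemma sq_mul_mul {c r : ℝ} (hc : 0 < c) (hr : 0 ≤ r) (y : ℝ) :
    gaussianDensity (c ^ 2 * r) (c * y) = c⁻¹ * gaussianDensity r y := by
  have hprefactor : (2 * π * (c ^ 2 * r)) ^ (-(1 : ℝ) / 2) =
      c⁻¹ * (2 * π * r) ^ (-(1 : ℝ) / 2) := by
    rw [show 2 * π * (c ^ 2 * r) = c ^ 2 * (2 * π * r) by ring,
      mul_rpow (by positivity) (by positivity), ← rpow_natCast_mul hc.le]
    norm_num [rpow_neg_one]
  have hexponent : -(c * y) ^ 2 / (2 * (c ^ 2 * r)) = -y ^ 2 / (2 * r) := by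
    rw [show -(c * y) ^ 2 = c ^ 2 * -y ^ 2 by ring,
      show 2 * (c ^ 2 * r) = c ^ 2 * (2 * r) by ring, mul_div_mul_left _ _ (by positivity)]
  rw [gaussianDensity, gaussianDensity, hprefactor, hexponent, mul_assoc]

theorem mul_eq_mul_bridge {p q : ℝ} (hp : 0 < p) (hq : 0 < q) (y w : ℝ) :
    gaussianDensity p y * gaussianDensity q w =
      gaussianDensity (p + q) (y + w) *
        gaussianDensity (p * q / (p + q)) ((p * w - q * y) / (p + q)) := by
  have hprefactor : (2 * π * p) ^ (-(1 : ℝ) / 2) * (2 * π * q) ^ (-(1 : ℝ) / 2) =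
      (2 * π * (p + q)) ^ (-(1 : ℝ) / 2) * (2 * π * (p * q / (p + q))) ^ (-(1 : ℝ) / 2) := by
    rw [← mul_rpow (by positivity) (by positivity), ← mul_rpow (by positivity) (by positivity)]
    congr 1
    field_simp
  have hexponent : -y ^ 2 / (2 * p) + -w ^ 2 / (2 * q) = -(y + w) ^ 2 / (2 * (p + q)) +
      -((p * w - q * y) / (p + q)) ^ 2 / (2 * (p * q / (p + q))) := by
    field_simp
    ring
  simp only [gaussianDensity]
  rw [mul_mul_mul_comm, hprefactor, ← exp_add, hexponent, exp_add, mul_mul_mul_comm]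

theorem integral_Ioo_bridge_eq_one {T x z : ℝ} (hT : 0 < T) (hx : 0 < x) (hz : 0 < z) :
    ∫ s in Set.Ioo 0 T,
      z / (T - s) * gaussianDensity (s * (T - s) / T) ((s * z - (T - s) * x) / T) = 1 := by
  have hsubst : ∀ v ∈ Set.Ioi (0 : ℝ), (2 * T * v / (1 + v ^ 2) ^ 2) •
      (fun s ↦ z / (T - s) * gaussianDensity (s * (T - s) / T) ((s * z - (T - s) * x) / T))
        (T * v ^ 2 / (1 + v ^ 2)) = 2 * z * gaussianDensity T (z * v - x / v) := by
    intro v (hv : 0 < v)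
    have hcompl : T - T * v ^ 2 / (1 + v ^ 2) = T / (1 + v ^ 2) := by
      field_simp
      ring
    have hvar : T * v ^ 2 / (1 + v ^ 2) * (T / (1 + v ^ 2)) / T = (v / (1 + v ^ 2)) ^ 2 * T := by
      field_simp
    have hpoint : (T * v ^ 2 / (1 + v ^ 2) * z - T / (1 + v ^ 2) * x) / T =
        v / (1 + v ^ 2) * (z * v - x / v) := by
      field_simp
    have hscale : 0 < v / (1 + v ^ 2) := by positivity
    simp only [hcompl, hvar, hpoint, sq_mul_mul hscale hT.le, smul_eq_mul]
    field_simp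
  rw [integral_Ioo_eq_integral_Ioi_smul_comp_mul_sq_div_one_add_sq hT,
    setIntegral_congr_fun measurableSet_Ioi hsubst, integral_const_mul, ← smul_eq_mul,
    integral_Ioi_comp_mul_sub_div_of_even hz hx (integrable hT.le) (even T), integral_eq_one hT]

end gaussianDensity

/-- Calculus identity: `∫₀^T (z/(T−s)) φ_{T−s}(z) φ_s(x) ds = φ_T(x+z)`, where
`φ_r(y) = (2πr)^(-1/2) exp(−y²/(2r))` is the centered Gaussian density of variance `r`. -/
theorem kendall_reflection_density_identity (T x z : ℝ) (hT : 0 < T) (hx : 0 < x) (hz : 0 < z) :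
    (∫ s in Set.Ioo (0 : ℝ) T,
        z / (T - s) * ((2 * Real.pi * (T - s)) ^ (-(1 : ℝ) / 2) *
            Real.exp (-z ^ 2 / (2 * (T - s)))) *
          ((2 * Real.pi * s) ^ (-(1 : ℝ) / 2) * Real.exp (-x ^ 2 / (2 * s)))) =
    (2 * Real.pi * T) ^ (-(1 : ℝ) / 2) * Real.exp (-(x + z) ^ 2 / (2 * T)) := by
  change ∫ s in Set.Ioo 0 T, z / (T - s) * gaussianDensity (T - s) z * gaussianDensity s x =
    gaussianDensity T (x + z)
  have hbridge : ∀ s ∈ Set.Ioo 0 T,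
      z / (T - s) * gaussianDensity (T - s) z * gaussianDensity s x = gaussianDensity T (x + z) *
        (z / (T - s) * gaussianDensity (s * (T - s) / T) ((s * z - (T - s) * x) / T)) := by
    rintro s ⟨hs, hsT⟩
    have hfactor := gaussianDensity.mul_eq_mul_bridge hs (sub_pos.2 hsT) x z
    rw [add_sub_cancel] at hfactor
    rw [mul_assoc, mul_comm (gaussianDensity (T - s) z), hfactor, mul_left_comm]
  rw [setIntegral_congr_fun measurableSet_Ioo hbridge, integral_const_mul,
    gaussianDensity.integral_Ioo_bridge_eq_one hT hx hz, mul_one]
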